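/- Let N ≥ 1, s ∈ (0,1), let G be a Young function satisfying the growth condition with exponents 1 < p⁻ ≤ p⁺ < ∞, and let Ω ⊆ ℝ^N be a nonempty open set. Let δ(x) := dist(x, ∂Ω). Assume: (i) there is c₁ > 0 such that ∫_{ℝ^N∖Ω} |x−y|^{−(N+sp⁻)} dy ≤ c₁ δ(x)^{−sp⁻} for every x ∈ Ω, and (ii) the fractional Orlicz–Hardy inequality holds on Ω, i.e. there is c₂ > 0 such that ∫_Ω G(u(x)/δ(x)^s) dx ≤ c₂ ∬_{Ω×Ω} G(|u(x)−u(y)|/|x−y|^s) |x−y|^{−N} dx dy for every nonnegative u ∈ C_c^∞(Ω). Then there exists C > 0 such that for every nonnegative u ∈ C_c^∞(Ω), ∬_{ℝ^N×ℝ^N} G(|u*(x)−u*(y)|/|x−y|^s) |x−y|^{−N} dx dy ≤ C ∬_{Ω×Ω} G(|u(x)−u(y)|/|x−y|^s) |x−y|^{−N} dx dy. -/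

import Mathlib

open MeasureTheory Metric Set Filter
open scoped ENNReal Topology

/-- The volume of the unit ball in `ℝ^N`. -/
noncomputable def ballVol (N : ℕ) : ℝ≥0∞ :=
  volume (Metric.ball (0 : EuclideanSpace ℝ (Fin N)) 1)

/-- The symmetric rearrangement `Ω*` of a set: the open ball centered at the origin
with the same volume. -/
noncomputable def rearrangeSet {N : ℕ} (Ω : Set (EuclideanSpace ℝ (Fin N))) :
    Set (EuclideanSpace ℝ (Fin N)) :=
  Metric.ball 0 (((volume Ω).toReal / (ballVol N).toReal) ^ ((N : ℝ)⁻¹))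

/-- The symmetric decreasing rearrangement `u*` of a nonnegative function:
`u* x = sup {t > 0 : |{u > t}| > α_N |x|^N}` (with `sup ∅ = 0`). -/
noncomputable def rearrangeFun {N : ℕ} (u : EuclideanSpace ℝ (Fin N) → ℝ)
    (x : EuclideanSpace ℝ (Fin N)) : ℝ :=
  sSup {t : ℝ | 0 < t ∧ ballVol N * ENNReal.ofReal (‖x‖ ^ N) < volume {y | t < u y}}

/-- `G` is a Young function with right-continuous nondecreasing density `g`. -/
structure IsYoungPair (G g : ℝ → ℝ) : Prop where
  g_zero : g 0 = 0
  g_pos : ∀ t > 0, 0 < g t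
  g_mono : MonotoneOn g (Set.Ici 0)
  g_rightCont : ∀ t ≥ 0, ContinuousWithinAt g (Set.Ici t) t
  g_tendsto : Filter.Tendsto g Filter.atTop Filter.atTop
  G_eq : ∀ t ≥ 0, G t = ∫ τ in (0:ℝ)..t, g τ

/-- The growth condition `pm ≤ t g(t)/G(t) ≤ pp` with exponents `1 < pm ≤ pp < ∞`. -/
def GrowthCond (G g : ℝ → ℝ) (pm pp : ℝ) : Prop :=
  1 < pm ∧ pm ≤ pp ∧ ∀ t > 0, pm * G t ≤ t * g t ∧ t * g t ≤ pp * G t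

/-- The fractional Orlicz–Sobolev seminorm
`∬_{A×B} G(|u x − u y|/|x−y|^s) |x−y|^{−N} dx dy`. -/
noncomputable def fracSeminorm {N : ℕ} (s : ℝ) (G : ℝ → ℝ)
    (u : EuclideanSpace ℝ (Fin N) → ℝ) (A B : Set (EuclideanSpace ℝ (Fin N))) : ℝ≥0∞ :=
  ∫⁻ x in A, ∫⁻ y in B,
    ENNReal.ofReal (G (|u x - u y| / dist x y ^ s) / dist x y ^ (N : ℝ))

/-- `u ∈ C_c^∞(Ω)`. -/
def IsTestFun {N : ℕ} (Ω : Set (EuclideanSpace ℝ (Fin N)))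
    (u : EuclideanSpace ℝ (Fin N) → ℝ) : Prop :=
  ContDiff ℝ (⊤ : ℕ∞) u ∧ HasCompactSupport u ∧ tsupport u ⊆ Ω

/-!
The Hardy inequality on `Ω` and the estimate of the complement kernel reduce the claim to `ℝ^N`:
for `|x - y| ≥ δ(x)` the growth condition gives
`G(u(x) / |x - y|^s) ≤ G(u(x) / δ(x)^s) (δ(x) / |x - y|)^(s p⁻)`, so the part of the seminorm over
`Ω × Ωᶜ` is controlled by the one over `Ω × Ω`.

On `ℝ^N` the integrand `G(|a| / r^s) r^(-N)`, with `a = u(x) - u(y)` and `r = |x - y|`, is up to a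
constant factor the superposition `∫_{ρ > r} G(|a| / ρ^s) ρ^(-N-1) dρ`. Each layer is a nonlocal
energy with a convex interaction in `a` and a nonincreasing kernel in `r`, which the
rearrangement does not increase (Almgren–Lieb). To see this, minimize the first moment
`∫ v(x) |x| dx` among the Lipschitz functions equimeasurable with `u` and of no larger energy. A
polarization with respect to the bisector of two points keeps these constraints and moves the
larger values towards the origin, so a minimizer is radially nonincreasing, that is, equal to `u*`.
-/

section Reflection

lemma exists_mem_segment_dist_eq {F : Type*} [SeminormedAddCommGroup F] [NormedSpace ℝ F]
    {p q x y : F} (hx : dist x p ≤ dist x q) (hy : dist y q ≤ dist y p) :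
    ∃ z ∈ segment ℝ x y, dist z p = dist z q :=
  (convex_segment x y).isPreconnected.intermediate_value₂ (left_mem_segment ℝ x y)
    (right_mem_segment ℝ x y) (by fun_prop) (by fun_prop) hx hy

variable {E : Type*} [NormedAddCommGroup E] [InnerProductSpace ℝ E] [FiniteDimensional ℝ E]
  {p q : E}

/-- The reflection of `E` across the perpendicular bisector of `p` and `q`; it is the identity
when `p = q`. -/
noncomputable def bisectorReflection (p q : E) : E ≃ᵃⁱ[ℝ] E :=
  haveI := (AffineSubspace.perpBisector_nonempty (p₁ := p) (p₂ := q)).to_subtype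
  EuclideanGeometry.reflection (AffineSubspace.perpBisector p q)

lemma bisectorReflection_involutive : Function.Involutive (bisectorReflection p q) :=
  have := (AffineSubspace.perpBisector_nonempty (p₁ := p) (p₂ := q)).to_subtype
  EuclideanGeometry.reflection_involutive _

@[simp] lemma bisectorReflection_bisectorReflection (x : E) :
    bisectorReflection p q (bisectorReflection p q x) = x :=
  bisectorReflection_involutive x

@[simp] lemma bisectorReflection_left : bisectorReflection p q p = q := by
  have := (AffineSubspace.perpBisector_nonempty (p₁ := p) (p₂ := q)).to_subtype
  have hp : p = (2⁻¹ : ℝ) • (p - q) +ᵥ midpoint ℝ p q := by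
    simp only [midpoint_eq_smul_add, vadd_eq_add, invOf_eq_inv]; module
  have horth : (2⁻¹ : ℝ) • (p - q) ∈ (AffineSubspace.perpBisector p q).directionᗮ := by
    rw [AffineSubspace.direction_perpBisector, vsub_eq_sub, Submodule.orthogonal_orthogonal]
    exact Submodule.mem_span_singleton.2 ⟨-2⁻¹, by module⟩
  conv_lhs => rw [bisectorReflection]; arg 2; rw [hp]
  rw [EuclideanGeometry.reflection_orthogonal_vadd
    (AffineSubspace.midpoint_mem_perpBisector p q) horth]
  simp only [midpoint_eq_smul_add, vadd_eq_add, invOf_eq_inv]; module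

@[simp] lemma bisectorReflection_right : bisectorReflection p q q = p :=
  (bisectorReflection_involutive.eq_iff).2 bisectorReflection_left.symm

lemma dist_bisectorReflection_left (x y : E) :
    dist (bisectorReflection p q x) y = dist x (bisectorReflection p q y) := by
  rw [← (bisectorReflection p q).dist_map, bisectorReflection_bisectorReflection]

lemma bisectorReflection_eq_self {x : E} (hx : dist x p = dist x q) :
    bisectorReflection p q x = x :=
  have := (AffineSubspace.perpBisector_nonempty (p₁ := p) (p₂ := q)).to_subtype
  (EuclideanGeometry.reflection_eq_self_iff x).2 (AffineSubspace.mem_perpBisector_iff_dist_eq.2 hx)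

lemma bisectorReflection_closer_iff {x : E} :
    dist (bisectorReflection p q x) p ≤ dist (bisectorReflection p q x) q ↔
      dist x q ≤ dist x p := by
  rw [dist_bisectorReflection_left, dist_bisectorReflection_left, bisectorReflection_left,
    bisectorReflection_right]

lemma dist_le_dist_bisectorReflection {x y : E} (hx : dist x p ≤ dist x q)
    (hy : dist y p ≤ dist y q) : dist x y ≤ dist x (bisectorReflection p q y) := by
  have hy' := bisectorReflection_closer_iff (p := p) (q := q) (x := bisectorReflection p q y)
  rw [bisectorReflection_bisectorReflection] at hy'
  obtain ⟨z, hz, hzpq⟩ := exists_mem_segment_dist_eq hx (hy'.1 hy)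
  calc dist x y ≤ dist x z + dist z y := dist_triangle _ _ _
    _ = dist x z + dist z (bisectorReflection p q y) := by
      rw [← dist_bisectorReflection_left, bisectorReflection_eq_self hzpq]
    _ = dist x (bisectorReflection p q y) := dist_add_dist_of_mem_segment hz

lemma norm_le_norm_bisectorReflection {x : E} (hpq : ‖p‖ ≤ ‖q‖) (hx : dist x p ≤ dist x q) :
    ‖x‖ ≤ ‖bisectorReflection p q x‖ := by
  simpa only [dist_zero_left] using dist_le_dist_bisectorReflection (x := 0) (by simpa) hx

lemma measurePreserving_bisectorReflection [MeasurableSpace E] [BorelSpace E] :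
    MeasurePreserving (bisectorReflection p q) := by
  have hσ : ⇑(bisectorReflection p q) =
      (· + bisectorReflection p q 0) ∘ (bisectorReflection p q).linearIsometryEquiv := by
    funext x
    simpa using (bisectorReflection p q).map_vadd 0 x
  rw [hσ]
  exact (measurePreserving_add_right volume _).comp
    (bisectorReflection p q).linearIsometryEquiv.measurePreserving

end Reflection

section Polarization

variable {E : Type*} [NormedAddCommGroup E] [InnerProductSpace ℝ E] [FiniteDimensional ℝ E]
  {p q : E} {v : E → ℝ}

/-- The polarization (two-point rearrangement) of `v` from `q` towards `p`: of the values of `v`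
at two points mirrored by `bisectorReflection p q`, the larger one is placed on the side of `p`. -/
noncomputable def polarize (p q : E) (v : E → ℝ) (x : E) : ℝ :=
  if dist x p ≤ dist x q then max (v x) (v (bisectorReflection p q x))
  else min (v x) (v (bisectorReflection p q x))

lemma polarize_of_le {x : E} (hx : dist x p ≤ dist x q) :
    polarize p q v x = max (v x) (v (bisectorReflection p q x)) := if_pos hx

lemma polarize_of_ge {x : E} (hx : dist x q ≤ dist x p) :
    polarize p q v x = min (v x) (v (bisectorReflection p q x)) := by
  rcases hx.lt_or_eq with hx | hx
  · exact if_neg hx.not_ge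
  · rw [polarize_of_le hx.ge, bisectorReflection_eq_self hx.symm, max_self, min_self]

lemma polarize_bisectorReflection_of_le {x : E} (hx : dist x p ≤ dist x q) :
    polarize p q v (bisectorReflection p q x) = min (v x) (v (bisectorReflection p q x)) := by
  rw [polarize_of_ge, bisectorReflection_bisectorReflection, min_comm]
  rwa [← bisectorReflection_closer_iff, bisectorReflection_bisectorReflection]

lemma forall_of_closer {P : E → Prop} (hP : ∀ x, P (bisectorReflection p q x) → P x)
    (h : ∀ x, dist x p ≤ dist x q → P x) (x : E) : P x :=
  (le_total (dist x p) (dist x q)).elim (h x) fun hx ↦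
    hP x (h _ (bisectorReflection_closer_iff.2 hx))

lemma polarize_eq_or_swap (p q : E) (v : E → ℝ) (x : E) :
    polarize p q v x = v x ∧
        polarize p q v (bisectorReflection p q x) = v (bisectorReflection p q x) ∨
      polarize p q v x = v (bisectorReflection p q x) ∧
        polarize p q v (bisectorReflection p q x) = v x := by
  induction x using forall_of_closer (p := p) (q := q) with
  | hP x ih =>
    rw [bisectorReflection_bisectorReflection] at ih
    exact ih.imp And.symm And.symm
  | h x hx =>
    rw [polarize_of_le hx, polarize_bisectorReflection_of_le hx]
    rcases le_total (v x) (v (bisectorReflection p q x)) with h | h <;> simp [h]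

lemma polarize_mem {S : Set ℝ} (hv : ∀ x, v x ∈ S) (x : E) : polarize p q v x ∈ S := by
  rcases polarize_eq_or_swap p q v x with ⟨h, -⟩ | ⟨h, -⟩ <;> exact h ▸ hv _

lemma apply_polarize_add {A : Type*} [AddCommMagma A] (φ : ℝ → A) (x : E) :
    φ (polarize p q v x) + φ (polarize p q v (bisectorReflection p q x)) =
      φ (v x) + φ (v (bisectorReflection p q x)) := by
  rcases polarize_eq_or_swap p q v x with ⟨h₁, h₂⟩ | ⟨h₁, h₂⟩ <;> rw [h₁, h₂]
  exact add_comm _ _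

lemma polarize_eq_zero_of_lt_norm (hpq : ‖p‖ ≤ ‖q‖) (hv : ∀ x, 0 ≤ v x) {R : ℝ}
    (hR : ∀ x, R < ‖x‖ → v x = 0) {x : E} (hx : R < ‖x‖) : polarize p q v x = 0 := by
  rcases le_total (dist x p) (dist x q) with h | h
  · rw [polarize_of_le h, hR x hx,
      hR _ (hx.trans_le (norm_le_norm_bisectorReflection hpq h)), max_self]
  · rw [polarize_of_ge h, hR x hx, min_eq_left (hv _)]

lemma lipschitzWith_polarize {K : NNReal} (hv : LipschitzWith K v) :
    LipschitzWith K (polarize p q v) := by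
  have hσ : LipschitzWith K (fun x ↦ v (bisectorReflection p q x)) := by
    simpa only [mul_one, Function.comp_def] using
      hv.comp (bisectorReflection p q).isometry.lipschitz
  have hmax := by simpa only [max_self] using hv.max hσ
  have hmin := by simpa only [max_self] using hv.min hσ
  have across : ∀ x y, dist x p ≤ dist x q → dist y q ≤ dist y p →
      dist (polarize p q v x) (polarize p q v y) ≤ K * dist x y := by
    intro x y hx hy
    obtain ⟨z, hz, hzpq⟩ := exists_mem_segment_dist_eq hx hy
    calc dist (polarize p q v x) (polarize p q v y)
        ≤ dist (polarize p q v x) (polarize p q v z) +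
          dist (polarize p q v z) (polarize p q v y) := dist_triangle _ _ _
      _ ≤ K * dist x z + K * dist z y := by
        refine add_le_add ?_ ?_
        · simpa only [polarize_of_le hx, polarize_of_le hzpq.le] using hmax.dist_le_mul x z
        · simpa only [polarize_of_ge hy, polarize_of_ge hzpq.ge] using hmin.dist_le_mul z y
      _ = K * dist x y := by rw [← mul_add, dist_add_dist_of_mem_segment hz]
  refine LipschitzWith.of_dist_le_mul fun x y ↦ ?_
  rcases le_total (dist x p) (dist x q) with hx | hx <;>
    rcases le_total (dist y p) (dist y q) with hy | hy
  · simpa only [polarize_of_le hx, polarize_of_le hy] using hmax.dist_le_mul x y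
  · exact across x y hx hy
  · rw [dist_comm, dist_comm x]; exact across y x hy hx
  · simpa only [polarize_of_ge hx, polarize_of_ge hy] using hmin.dist_le_mul x y

/-- The first moment density of `v`, symmetrized over the two points `x` and
`bisectorReflection p q x`. -/
noncomputable def pairMoment (p q : E) (v : E → ℝ) (x : E) : ℝ :=
  v x * ‖x‖ + v (bisectorReflection p q x) * ‖bisectorReflection p q x‖

lemma pairMoment_nonneg (hv : ∀ x, 0 ≤ v x) (x : E) : 0 ≤ pairMoment p q v x :=
  add_nonneg (mul_nonneg (hv _) (norm_nonneg _)) (mul_nonneg (hv _) (norm_nonneg _))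

lemma continuous_pairMoment (hv : Continuous v) : Continuous (pairMoment p q v) := by
  have hσ := (bisectorReflection p q).continuous
  unfold pairMoment
  fun_prop

lemma pairMoment_polarize_le (hpq : ‖p‖ ≤ ‖q‖) (x : E) :
    pairMoment p q (polarize p q v) x ≤ pairMoment p q v x := by
  unfold pairMoment
  induction x using forall_of_closer (p := p) (q := q) with
  | hP x ih =>
    rw [bisectorReflection_bisectorReflection] at ih
    linarith
  | h x hx =>
    have hnorm := norm_le_norm_bisectorReflection hpq hx
    rw [polarize_of_le hx, polarize_bisectorReflection_of_le hx]
    rcases le_total (v x) (v (bisectorReflection p q x)) with h | h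
    · rw [max_eq_right h, min_eq_left h]; nlinarith
    · rw [max_eq_left h, min_eq_right h]

end Polarization

section ConvexEnergy

lemma sub_add_sub_le_of_convexOn {J : ℝ → ℝ} (hJ : ConvexOn ℝ univ J) {a₁ a₂ b₁ b₂ : ℝ}
    (ha : a₂ ≤ a₁) (hb : b₂ ≤ b₁) :
    J (a₁ - b₁) + J (a₂ - b₂) ≤ J (a₁ - b₂) + J (a₂ - b₁) := by
  rcases (add_nonneg (sub_nonneg.2 ha) (sub_nonneg.2 hb)).eq_or_lt with h | h
  · rw [show a₁ = a₂ by linarith, show b₁ = b₂ by linarith]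
  -- Both arguments on the left are convex combinations of `a₁ - b₂` and `a₂ - b₁`, with
  -- interchanged weights.
  set D := (a₁ - a₂) + (b₁ - b₂) with hD
  have hp : 0 ≤ (a₁ - a₂) / D := div_nonneg (sub_nonneg.2 ha) h.le
  have hq : 0 ≤ (b₁ - b₂) / D := div_nonneg (sub_nonneg.2 hb) h.le
  have hpq : (a₁ - a₂) / D + (b₁ - b₂) / D = 1 := by rw [← add_div, div_self h.ne']
  have h₁ := hJ.2 (mem_univ (a₁ - b₂)) (mem_univ (a₂ - b₁)) hp hq hpq
  have h₂ := hJ.2 (mem_univ (a₁ - b₂)) (mem_univ (a₂ - b₁)) hq hp (by linarith)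
  simp only [smul_eq_mul] at h₁ h₂
  rw [show (a₁ - a₂) / D * (a₁ - b₂) + (b₁ - b₂) / D * (a₂ - b₁) = a₁ - b₁ by
    field_simp; rw [hD]; ring] at h₁
  rw [show (b₁ - b₂) / D * (a₁ - b₂) + (a₁ - a₂) / D * (a₂ - b₁) = a₂ - b₂ by
    field_simp; rw [hD]; ring] at h₂
  linear_combination h₁ + h₂ + (J (a₁ - b₂) + J (a₂ - b₁)) * hpq

lemma mul_add_mul_le_mul_add_mul_swap {A : Type*} [CommSemiring A] [PartialOrder A]
    [CanonicallyOrderedAdd A] [IsOrderedRing A] {k₁ k₂ t₁ t₂ : A} (hk : k₂ ≤ k₁) (ht : t₁ ≤ t₂) :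
    k₁ * t₁ + k₂ * t₂ ≤ k₁ * t₂ + k₂ * t₁ := by
  obtain ⟨e, rfl⟩ := exists_add_of_le hk
  calc (k₂ + e) * t₁ + k₂ * t₂ = k₂ * (t₁ + t₂) + e * t₁ := by ring
    _ ≤ k₂ * (t₁ + t₂) + e * t₂ := by gcongr
    _ = (k₂ + e) * t₂ + k₂ * t₁ := by ring

/-- The energy density of the pair `(x, y)` for the kernel `k` and the interaction `J`. -/
noncomputable def interaction {X : Type*} [Dist X] (k : ℝ → ℝ≥0∞) (J : ℝ → ℝ) (v : X → ℝ)
    (x y : X) : ℝ≥0∞ :=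
  k (dist x y) * ENNReal.ofReal (J (v x - v y))

/-- The nonlocal energy of `v` for the kernel `k` and the interaction `J`. -/
noncomputable def kernelEnergy {X : Type*} [Dist X] [MeasureSpace X] (k : ℝ → ℝ≥0∞) (J : ℝ → ℝ)
    (v : X → ℝ) : ℝ≥0∞ :=
  ∫⁻ x, ∫⁻ y, interaction k J v x y

section

variable {X : Type*} [PseudoMetricSpace X] [SecondCountableTopology X] {k : ℝ → ℝ≥0∞} {J : ℝ → ℝ}

lemma measurable_interaction [MeasurableSpace X] [OpensMeasurableSpace X] (hk : Measurable k)
    (hJ : Measurable J) {v : X → ℝ} (hv : Measurable v) :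
    Measurable (Function.uncurry (interaction k J v)) := by
  unfold Function.uncurry interaction
  fun_prop

lemma kernelEnergy_le_liminf [MeasureSpace X] [OpensMeasurableSpace X]
    [SFinite (volume : Measure X)] (hk : Measurable k) (hJ : Continuous J) {f : ℕ → X → ℝ}
    (hf : ∀ n, Measurable (f n)) {v : X → ℝ} (h : ∀ x, Tendsto (fun n ↦ f n x) atTop (𝓝 (v x))) :
    kernelEnergy k J v ≤ liminf (fun n ↦ kernelEnergy k J (f n)) atTop := by
  have hm := fun n ↦ measurable_interaction hk hJ.measurable (hf n)
  have hpt : ∀ x y, interaction k J v x y ≤ liminf (fun n ↦ interaction k J (f n) x y) atTop := by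
    intro x y
    have hlim : Tendsto (fun n ↦ ENNReal.ofReal (J (f n x - f n y))) atTop
        (𝓝 (ENNReal.ofReal (J (v x - v y)))) :=
      ENNReal.tendsto_ofReal ((hJ.tendsto _).comp ((h x).sub (h y)))
    have hmul := ENNReal.le_liminf_mul (f := atTop) (u := fun _ : ℕ ↦ k (dist x y))
      (v := fun n ↦ ENNReal.ofReal (J (f n x - f n y)))
    rwa [liminf_const, hlim.liminf_eq] at hmul
  calc ∫⁻ x, ∫⁻ y, interaction k J v x y
      ≤ ∫⁻ x, ∫⁻ y, liminf (fun n ↦ interaction k J (f n) x y) atTop :=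
        lintegral_mono fun x ↦ lintegral_mono (hpt x)
    _ ≤ ∫⁻ x, liminf (fun n ↦ ∫⁻ y, interaction k J (f n) x y) atTop :=
        lintegral_mono fun x ↦ lintegral_liminf_le fun n ↦ (hm n).of_uncurry_left
    _ ≤ liminf (fun n ↦ kernelEnergy k J (f n)) atTop :=
        lintegral_liminf_le fun n ↦ (hm n).lintegral_prod_right'

end

variable {E : Type*} [NormedAddCommGroup E] [InnerProductSpace ℝ E] [FiniteDimensional ℝ E]
  {p q : E} {v : E → ℝ}

/-- The sum of `f` over the orbits of two points under `bisectorReflection p q`. -/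
noncomputable def reflectionSum (p q : E) (f : E → E → ℝ≥0∞) (x y : E) : ℝ≥0∞ :=
  (f x y + f (bisectorReflection p q x) (bisectorReflection p q y)) +
    (f x (bisectorReflection p q y) + f (bisectorReflection p q x) y)

lemma reflectionSum_bisectorReflection_left (f : E → E → ℝ≥0∞) (x y : E) :
    reflectionSum p q f (bisectorReflection p q x) y = reflectionSum p q f x y := by
  simp only [reflectionSum, bisectorReflection_bisectorReflection]
  ring

lemma reflectionSum_bisectorReflection_right (f : E → E → ℝ≥0∞) (x y : E) :
    reflectionSum p q f x (bisectorReflection p q y) = reflectionSum p q f x y := by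
  simp only [reflectionSum, bisectorReflection_bisectorReflection]
  ring

lemma reflectionSum_interaction (k : ℝ → ℝ≥0∞) {J : ℝ → ℝ} (hJ0 : ∀ a, 0 ≤ J a) (v : E → ℝ)
    (x y : E) :
    reflectionSum p q (interaction k J v) x y =
      k (dist x y) * ENNReal.ofReal (J (v x - v y) +
        J (v (bisectorReflection p q x) - v (bisectorReflection p q y))) +
      k (dist x (bisectorReflection p q y)) *
        ENNReal.ofReal (J (v x - v (bisectorReflection p q y)) +
          J (v (bisectorReflection p q x) - v y)) := by
  simp only [reflectionSum, interaction, dist_bisectorReflection_left,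
    bisectorReflection_bisectorReflection, ENNReal.ofReal_add (hJ0 _) (hJ0 _)]
  ring

lemma reflectionSum_interaction_polarize_le {k : ℝ → ℝ≥0∞} (hk : Antitone k) {J : ℝ → ℝ}
    (hJ : ConvexOn ℝ univ J) (hJ0 : ∀ a, 0 ≤ J a) (v : E → ℝ) (x y : E) :
    reflectionSum p q (interaction k J (polarize p q v)) x y ≤
      reflectionSum p q (interaction k J v) x y := by
  induction x using forall_of_closer (p := p) (q := q) with
  | hP x ih => simpa only [reflectionSum_bisectorReflection_left] using ih
  | h x hx =>
  induction y using forall_of_closer (p := p) (q := q) with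
  | hP y ih => simpa only [reflectionSum_bisectorReflection_right] using ih
  | h y hy =>
  have hd := hk (dist_le_dist_bisectorReflection hx hy)
  rw [reflectionSum_interaction k hJ0, reflectionSum_interaction k hJ0, polarize_of_le hx,
    polarize_of_le hy, polarize_bisectorReflection_of_le hx, polarize_bisectorReflection_of_le hy]
  generalize v x = a, v y = b, v (bisectorReflection p q x) = a', v (bisectorReflection p q y) = b'
  rcases le_total a a' with ha | ha <;> rcases le_total b b' with hb | hb <;>
    simp only [ha, hb, max_eq_left, max_eq_right, min_eq_left, min_eq_right]
  · rw [add_comm (J (a' - b')), add_comm (J (a' - b))]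
  · rw [add_comm (J (a - b)), add_comm (J (a - b'))]
    exact mul_add_mul_le_mul_add_mul_swap hd
      (ENNReal.ofReal_le_ofReal (sub_add_sub_le_of_convexOn hJ ha hb))
  · exact mul_add_mul_le_mul_add_mul_swap hd
      (ENNReal.ofReal_le_ofReal (sub_add_sub_le_of_convexOn hJ ha hb))
  · rfl

variable [MeasurableSpace E] [BorelSpace E]

lemma measurable_polarize (hv : Measurable v) : Measurable (polarize p q v) := by
  have := (measurePreserving_bisectorReflection (p := p) (q := q)).measurable
  exact Measurable.ite (measurableSet_le (by fun_prop) (by fun_prop)) (by fun_prop) (by fun_prop)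

lemma lintegral_add_bisectorReflection {f : E → ℝ≥0∞} (hf : Measurable f) :
    ∫⁻ x, (f x + f (bisectorReflection p q x)) = 2 * ∫⁻ x, f x := by
  rw [lintegral_add_left hf, measurePreserving_bisectorReflection.lintegral_comp hf, two_mul]

lemma lintegral_comp_polarize {φ : ℝ → ℝ≥0∞} (hφ : Measurable φ) (hv : Measurable v) :
    ∫⁻ x, φ (polarize p q v x) = ∫⁻ x, φ (v x) := by
  have h : 2 * ∫⁻ x, φ (polarize p q v x) = 2 * ∫⁻ x, φ (v x) := by
    calc 2 * ∫⁻ x, φ (polarize p q v x)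
        = ∫⁻ x, (φ (polarize p q v x) + φ (polarize p q v (bisectorReflection p q x))) :=
          (lintegral_add_bisectorReflection (hφ.comp (measurable_polarize hv))).symm
      _ = ∫⁻ x, (φ (v x) + φ (v (bisectorReflection p q x))) :=
          lintegral_congr (apply_polarize_add φ)
      _ = 2 * ∫⁻ x, φ (v x) := lintegral_add_bisectorReflection (hφ.comp hv)
  exact (ENNReal.mul_right_inj two_ne_zero ENNReal.ofNat_ne_top).1 h

lemma volume_lt_polarize (hv : Measurable v) (t : ℝ) :
    volume {x | t < polarize p q v x} = volume {x | t < v x} := by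
  have h := lintegral_comp_polarize (p := p) (q := q) (φ := (Ioi t).indicator 1)
    (measurable_one.indicator measurableSet_Ioi) hv
  rwa [← lintegral_indicator_one (measurableSet_lt measurable_const (measurable_polarize hv)),
    ← lintegral_indicator_one (measurableSet_lt measurable_const hv)]

lemma lintegral_reflectionSum {f : E → E → ℝ≥0∞} (hf : Measurable (Function.uncurry f)) :
    ∫⁻ x, ∫⁻ y, reflectionSum p q f x y = 4 * ∫⁻ x, ∫⁻ y, f x y := by
  have hσ := (measurePreserving_bisectorReflection (p := p) (q := q)).measurable
  have hfx : ∀ x, Measurable (f x) := fun x ↦ hf.of_uncurry_left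
  have h : ∀ x, ∫⁻ y, reflectionSum p q f x y =
      2 * ((∫⁻ y, f x y) + ∫⁻ y, f (bisectorReflection p q x) y) := by
    intro x
    rw [mul_add, ← lintegral_add_bisectorReflection (p := p) (q := q) (hfx x),
      ← lintegral_add_bisectorReflection (p := p) (q := q) (hfx _),
      ← lintegral_add_left (by fun_prop)]
    exact lintegral_congr fun y ↦ by unfold reflectionSum; ring
  simp_rw [h]
  rw [lintegral_const_mul' _ _ ENNReal.ofNat_ne_top,
    lintegral_add_bisectorReflection (f := fun x ↦ ∫⁻ y, f x y) hf.lintegral_prod_right',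
    ← mul_assoc]
  norm_num

lemma kernelEnergy_polarize_le {k : ℝ → ℝ≥0∞} (hk : Antitone k) {J : ℝ → ℝ}
    (hJ : ConvexOn ℝ univ J) (hJ0 : ∀ a, 0 ≤ J a) (hv : Measurable v) :
    kernelEnergy k J (polarize p q v) ≤ kernelEnergy k J v := by
  have hJm : Measurable J := hJ.locallyLipschitz.continuous.measurable
  have h : 4 * kernelEnergy k J (polarize p q v) ≤ 4 * kernelEnergy k J v := by
    unfold kernelEnergy
    rw [← lintegral_reflectionSum (p := p) (q := q)
        (measurable_interaction hk.measurable hJm (measurable_polarize hv)),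
      ← lintegral_reflectionSum (p := p) (q := q) (measurable_interaction hk.measurable hJm hv)]
    exact lintegral_mono fun x ↦ lintegral_mono fun y ↦
      reflectionSum_interaction_polarize_le hk hJ hJ0 v x y
  exact (ENNReal.mul_le_mul_iff_right (by norm_num) ENNReal.ofNat_ne_top).1 h

end ConvexEnergy

section Competitors

lemma measure_lt_le_of_forall_add {X : Type*} [MeasurableSpace X] {μ : Measure X} {f : X → ℝ}
    {t : ℝ} {c : ℝ≥0∞} (h : ∀ ε > 0, μ {x | t + ε < f x} ≤ c) : μ {x | t < f x} ≤ c := by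
  have hmono : Monotone fun n : ℕ ↦ {x | t + 1 / (n + 1 : ℝ) < f x} := fun m n hmn x hx ↦
    (add_le_add_right (Nat.one_div_le_one_div hmn) t).trans_lt hx
  have hunion : {x | t < f x} = ⋃ n : ℕ, {x | t + 1 / (n + 1 : ℝ) < f x} := by
    refine subset_antisymm (fun x (hx : t < f x) ↦ ?_) (iUnion_subset fun n x hx ↦ ?_)
    · obtain ⟨n, hn⟩ := exists_nat_one_div_lt (sub_pos.2 hx)
      exact mem_iUnion.2 ⟨n, lt_sub_iff_add_lt'.1 hn⟩
    · exact (lt_add_of_pos_right t Nat.one_div_pos_of_nat).trans hx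
  rw [hunion, hmono.measure_iUnion]
  exact iSup_le fun n ↦ h _ Nat.one_div_pos_of_nat

lemma measure_lt_eq_of_tendstoUniformly {X ι : Type*} [MeasurableSpace X] {μ : Measure X}
    {l : Filter ι} [l.NeBot] {f : ι → X → ℝ} {u v : X → ℝ} (h : TendstoUniformly f v l)
    (hf : ∀ i, ∀ t > 0, μ {x | t < f i x} = μ {x | t < u x}) {t : ℝ} (ht : 0 < t) :
    μ {x | t < v x} = μ {x | t < u x} := by
  have near : ∀ ε > 0, ∃ i, ∀ x, |v x - f i x| < ε := fun ε hε ↦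
    (Metric.tendstoUniformly_iff.1 h ε hε).exists
  refine le_antisymm (measure_lt_le_of_forall_add fun ε hε ↦ ?_)
    (measure_lt_le_of_forall_add fun ε hε ↦ ?_) <;> obtain ⟨i, hi⟩ := near ε hε
  · rw [← hf i t ht]
    exact measure_mono fun x (hx : t + ε < v x) ↦
      show t < f i x by linarith [(abs_lt.1 (hi x)).2]
  · rw [← hf i (t + ε) (by positivity)]
    exact measure_mono fun x (hx : t + ε < f i x) ↦
      show t < v x by linarith [(abs_lt.1 (hi x)).1]

lemma isCompact_lipschitzWith_mem_Icc {X : Type*} [PseudoMetricSpace X] (K : NNReal) (a b : ℝ) :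
    IsCompact {φ : C(X, ℝ) | LipschitzWith K φ ∧ ∀ x, φ x ∈ Icc a b} := by
  refine ArzelaAscoli.isCompact_of_equicontinuous _ ?_
    (LipschitzWith.uniformEquicontinuous _ K fun φ ↦ φ.2.1).equicontinuous
  have himage : ContinuousMap.toFun '' {φ : C(X, ℝ) | LipschitzWith K φ ∧ ∀ x, φ x ∈ Icc a b} =
      (univ.pi fun _ ↦ Icc a b) ∩ ⋂ (x : X) (y : X), {φ | dist (φ x) (φ y) ≤ K * dist x y} := by
    ext φ
    simp only [mem_image, mem_inter_iff, Set.mem_pi, mem_iInter, Set.mem_ofPred_eq]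
    constructor
    · rintro ⟨φ, ⟨hlip, hmem⟩, rfl⟩
      exact ⟨fun x _ ↦ hmem x, fun x y ↦ hlip.dist_le_mul x y⟩
    · rintro ⟨hmem, hdist⟩
      have hlip := LipschitzWith.of_dist_le_mul hdist
      exact ⟨⟨φ, hlip.continuous⟩, ⟨hlip, fun x ↦ hmem x trivial⟩, rfl⟩
  rw [himage]
  refine (isCompact_univ_pi fun _ ↦ isCompact_Icc).inter_right ?_
  refine isClosed_iInter fun x ↦ isClosed_iInter fun y ↦ isClosed_le ?_ continuous_const
  exact (continuous_apply x).dist (continuous_apply y)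

lemma exists_subseq_tendstoUniformly_of_lipschitzWith {X : Type*} [PseudoMetricSpace X]
    [ProperSpace X] {K : NNReal} {a b : ℝ} {S : Set X} (hS : IsCompact S) {f : ℕ → X → ℝ}
    (hf : ∀ n, LipschitzWith K (f n)) (hmem : ∀ n x, f n x ∈ Icc a b)
    (hzero : ∀ n, ∀ x ∉ S, f n x = 0) :
    ∃ (v : X → ℝ) (θ : ℕ → ℕ), StrictMono θ ∧ TendstoUniformly (f ∘ θ) v atTop := by
  obtain ⟨v, -, θ, hθ, h⟩ := (isCompact_lipschitzWith_mem_Icc K a b).tendsto_subseq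
    (x := fun n ↦ (⟨f n, (hf n).continuous⟩ : C(X, ℝ))) fun n ↦ ⟨hf n, hmem n⟩
  have hvzero : ∀ x ∉ S, v x = 0 := fun x hx ↦
    tendsto_nhds_unique (((ContinuousEvalConst.continuous_eval_const x).tendsto v).comp h)
      (by simp [Function.comp_def, hzero _ x hx])
  refine ⟨v, θ, hθ, Metric.tendstoUniformly_iff.2 fun ε hε ↦ ?_⟩
  have hunif := ContinuousMap.tendsto_iff_forall_isCompact_tendstoUniformlyOn.1 h S hS
  filter_upwards [Metric.tendstoUniformlyOn_iff.1 hunif ε hε] with n hn x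
  by_cases hx : x ∈ S
  · exact hn x hx
  · simpa [hvzero x hx, hzero _ x hx] using hε

variable {E : Type*} [NormedAddCommGroup E] [MeasureSpace E]
  {k : ℝ → ℝ≥0∞} {J : ℝ → ℝ} {K : NNReal} {M R : ℝ} {u v : E → ℝ}

/-- `v` is equimeasurable with `u`, has no larger energy, and satisfies the prescribed bounds on
its Lipschitz constant, its values and its support. The symmetric decreasing rearrangement of `u`
is found as a minimizer of `firstMoment` among these functions. -/
structure IsCompetitor (k : ℝ → ℝ≥0∞) (J : ℝ → ℝ) (K : NNReal) (M R : ℝ) (u v : E → ℝ) :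
    Prop where
  lipschitz : LipschitzWith K v
  mem_Icc : ∀ x, v x ∈ Icc 0 M
  eq_zero : ∀ x, R < ‖x‖ → v x = 0
  volume_lt_eq : ∀ t > 0, volume {x | t < v x} = volume {x | t < u x}
  energy_le : kernelEnergy k J v ≤ kernelEnergy k J u

lemma exists_isCompetitor_self (k : ℝ → ℝ≥0∞) (J : ℝ → ℝ)
    (hu : LipschitzWith K u) (hsupp : HasCompactSupport u) (hu0 : ∀ x, 0 ≤ u x) :
    ∃ M R, IsCompetitor k J K M R u u := by
  obtain ⟨M, hM⟩ := hsupp.exists_bound_of_continuous hu.continuous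
  obtain ⟨R, hR⟩ := hsupp.isBounded.subset_closedBall (0 : E)
  exact ⟨M, R, hu, fun x ↦ ⟨hu0 x, (le_abs_self _).trans (hM x)⟩,
    fun x hx ↦ image_eq_zero_of_notMem_tsupport fun h ↦
      hx.not_ge (mem_closedBall_zero_iff.1 (hR h)), fun _ _ ↦ rfl, le_rfl⟩

/-- The first moment `∫ v(x) |x| dx` of a nonnegative function. -/
noncomputable def firstMoment (v : E → ℝ) : ℝ≥0∞ := ∫⁻ x, ENNReal.ofReal (v x * ‖x‖)

lemma IsCompetitor.of_tendstoUniformly [OpensMeasurableSpace E] [SecondCountableTopology E]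
    [SFinite (volume : Measure E)] (hk : Measurable k) (hJ : Continuous J) {f : ℕ → E → ℝ}
    (hf : ∀ n, IsCompetitor k J K M R u (f n)) (h : TendstoUniformly f v atTop) :
    IsCompetitor k J K M R u v where
  lipschitz := LipschitzWith.of_dist_le_mul fun x y ↦
    le_of_tendsto ((h.tendsto_at x).dist (h.tendsto_at y))
      (Eventually.of_forall fun n ↦ (hf n).lipschitz.dist_le_mul x y)
  mem_Icc x := isClosed_Icc.mem_of_tendsto (h.tendsto_at x)
    (Eventually.of_forall fun n ↦ (hf n).mem_Icc x)
  eq_zero x hx := tendsto_nhds_unique (h.tendsto_at x) (by simp [fun n ↦ (hf n).eq_zero x hx])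
  volume_lt_eq _ := measure_lt_eq_of_tendstoUniformly h fun n ↦ (hf n).volume_lt_eq
  energy_le := calc
    kernelEnergy k J v ≤ liminf (fun n ↦ kernelEnergy k J (f n)) atTop :=
      kernelEnergy_le_liminf hk hJ (fun n ↦ (hf n).lipschitz.continuous.measurable) h.tendsto_at
    _ ≤ liminf (fun _ : ℕ ↦ kernelEnergy k J u) atTop :=
      liminf_le_liminf (Eventually.of_forall fun n ↦ (hf n).energy_le)
    _ = kernelEnergy k J u := liminf_const _

lemma firstMoment_le_liminf [OpensMeasurableSpace E] {f : ℕ → E → ℝ} (hf : ∀ n, Measurable (f n))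
    (h : ∀ x, Tendsto (fun n ↦ f n x) atTop (𝓝 (v x))) :
    firstMoment v ≤ liminf (fun n ↦ firstMoment (f n)) atTop := calc
  firstMoment v = ∫⁻ x, liminf (fun n ↦ ENNReal.ofReal (f n x * ‖x‖)) atTop :=
    lintegral_congr fun x ↦ (ENNReal.tendsto_ofReal ((h x).mul_const _)).liminf_eq.symm
  _ ≤ liminf (fun n ↦ firstMoment (f n)) atTop :=
    lintegral_liminf_le fun n ↦ ((hf n).mul measurable_norm).ennreal_ofReal

lemma IsCompetitor.exists_forall_firstMoment_le [ProperSpace E] [OpensMeasurableSpace E]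
    [SFinite (volume : Measure E)] (hk : Measurable k) (hJ : Continuous J)
    (hu : IsCompetitor k J K M R u u) :
    ∃ v, IsCompetitor k J K M R u v ∧
      ∀ w, IsCompetitor k J K M R u w → firstMoment v ≤ firstMoment w := by
  obtain ⟨a, -, ha, hmem⟩ := exists_seq_tendsto_sInf
    (S := firstMoment '' {w | IsCompetitor k J K M R u w}) ⟨_, u, hu, rfl⟩ (OrderBot.bddBelow _)
  choose f hf hfa using hmem
  obtain ⟨v, θ, hθ, hv⟩ := exists_subseq_tendstoUniformly_of_lipschitzWith
    (isCompact_closedBall (0 : E) R) (fun n ↦ (hf n).lipschitz) (fun n ↦ (hf n).mem_Icc)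
    fun n x hx ↦ (hf n).eq_zero x (by simpa using hx)
  refine ⟨v, .of_tendstoUniformly hk hJ (fun n ↦ hf (θ n)) hv, fun w hw ↦ ?_⟩
  calc firstMoment v ≤ liminf (fun n ↦ firstMoment (f (θ n))) atTop :=
        firstMoment_le_liminf (fun n ↦ (hf (θ n)).lipschitz.continuous.measurable) hv.tendsto_at
    _ = sInf (firstMoment '' {w | IsCompetitor k J K M R u w}) := by
      simp_rw [hfa]
      exact (ha.comp hθ.tendsto_atTop).liminf_eq
    _ ≤ firstMoment w := sInf_le ⟨w, hw, rfl⟩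

lemma IsCompetitor.firstMoment_ne_top [ProperSpace E] [OpensMeasurableSpace E]
    [IsFiniteMeasureOnCompacts (volume : Measure E)] (hv : IsCompetitor k J K M R u v) :
    firstMoment v ≠ ∞ := by
  have hsupp : HasCompactSupport v := HasCompactSupport.intro (isCompact_closedBall (0 : E) R)
    fun x hx ↦ hv.eq_zero x (by simpa using hx)
  exact ((hv.lipschitz.continuous.mul continuous_norm).integrable_of_hasCompactSupport
    hsupp.mul_right).lintegral_lt_top.ne

end Competitors

section RadialMinimizer

variable {E : Type*} [NormedAddCommGroup E] [InnerProductSpace ℝ E] [FiniteDimensional ℝ E]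
  [MeasurableSpace E] [BorelSpace E] {p q : E}
  {k : ℝ → ℝ≥0∞} {J : ℝ → ℝ} {K : NNReal} {M R : ℝ} {u v : E → ℝ}

lemma IsCompetitor.polarize (hk : Antitone k) (hJ : ConvexOn ℝ univ J) (hJ0 : ∀ a, 0 ≤ J a)
    (hpq : ‖p‖ ≤ ‖q‖) (hv : IsCompetitor k J K M R u v) :
    IsCompetitor k J K M R u (polarize p q v) where
  lipschitz := lipschitzWith_polarize hv.lipschitz
  mem_Icc := polarize_mem hv.mem_Icc
  eq_zero _ := polarize_eq_zero_of_lt_norm hpq (fun x ↦ (hv.mem_Icc x).1) hv.eq_zero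
  volume_lt_eq t ht :=
    (volume_lt_polarize hv.lipschitz.continuous.measurable t).trans (hv.volume_lt_eq t ht)
  energy_le :=
    (kernelEnergy_polarize_le hk hJ hJ0 hv.lipschitz.continuous.measurable).trans hv.energy_le

lemma two_mul_firstMoment (hv : Continuous v) (hv0 : ∀ x, 0 ≤ v x) :
    2 * firstMoment v = ∫⁻ x, ENNReal.ofReal (pairMoment p q v x) := by
  rw [firstMoment, ← lintegral_add_bisectorReflection (p := p) (q := q) (by fun_prop)]
  exact lintegral_congr fun x ↦ (ENNReal.ofReal_add (mul_nonneg (hv0 _) (norm_nonneg _))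
    (mul_nonneg (hv0 _) (norm_nonneg _))).symm

lemma IsCompetitor.pairMoment_polarize_eq (hk : Antitone k) (hJ : ConvexOn ℝ univ J)
    (hJ0 : ∀ a, 0 ≤ J a) (hv : IsCompetitor k J K M R u v)
    (hmin : ∀ w, IsCompetitor k J K M R u w → firstMoment v ≤ firstMoment w)
    (hpq : ‖p‖ ≤ ‖q‖) (x : E) :
    pairMoment p q (_root_.polarize p q v) x = pairMoment p q v x := by
  have hP := hv.polarize hk hJ hJ0 hpq
  have hvc := hv.lipschitz.continuous
  have hPc := hP.lipschitz.continuous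
  have hv0 := fun x ↦ (hv.mem_Icc x).1
  have hP0 := fun x ↦ (hP.mem_Icc x).1
  have hvint := two_mul_firstMoment (p := p) (q := q) hvc hv0
  have hPint := two_mul_firstMoment (p := p) (q := q) hPc hP0
  have hae := ae_eq_of_ae_le_of_lintegral_le
    (ae_of_all volume fun x ↦ ENNReal.ofReal_le_ofReal (pairMoment_polarize_le hpq x))
    (hPint ▸ ENNReal.mul_ne_top ENNReal.ofNat_ne_top hP.firstMoment_ne_top)
    (continuous_pairMoment hvc).measurable.ennreal_ofReal.aemeasurable
    (hPint ▸ hvint ▸ mul_le_mul_right (hmin _ hP) 2)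
  have heq := (Continuous.ae_eq_iff_eq volume
    (ENNReal.continuous_ofReal.comp (continuous_pairMoment hPc))
    (ENNReal.continuous_ofReal.comp (continuous_pairMoment hvc))).1 hae
  exact (ENNReal.ofReal_eq_ofReal_iff (pairMoment_nonneg hP0 x) (pairMoment_nonneg hv0 x)).1
    (congr_fun heq x)

lemma IsCompetitor.le_of_norm_lt (hk : Antitone k) (hJ : ConvexOn ℝ univ J)
    (hJ0 : ∀ a, 0 ≤ J a) (hv : IsCompetitor k J K M R u v)
    (hmin : ∀ w, IsCompetitor k J K M R u w → firstMoment v ≤ firstMoment w)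
    (hpq : ‖p‖ < ‖q‖) : v q ≤ v p := by
  by_contra! hlt
  have hpp : dist p p ≤ dist p q := by simp
  have heq := hv.pairMoment_polarize_eq hk hJ hJ0 hmin hpq.le p
  rw [pairMoment, pairMoment, polarize_of_le hpp, polarize_bisectorReflection_of_le hpp,
    bisectorReflection_left, max_eq_right hlt.le, min_eq_left hlt.le] at heq
  nlinarith

end RadialMinimizer

section Rearrangement

variable {N : ℕ} {k : ℝ → ℝ≥0∞} {J : ℝ → ℝ} {K : NNReal} {M R : ℝ}
  {u v : EuclideanSpace ℝ (Fin N) → ℝ}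

lemma volume_closedBall_zero_eq_ballVol_mul {r : ℝ} (hr : 0 ≤ r) :
    volume (closedBall (0 : EuclideanSpace ℝ (Fin N)) r) = ballVol N * ENNReal.ofReal (r ^ N) := by
  rw [Measure.addHaar_closedBall _ _ hr, finrank_euclideanSpace_fin, mul_comm, ballVol]

lemma rearrangeFun_congr (h : ∀ t > 0, volume {x | t < v x} = volume {x | t < u x}) :
    rearrangeFun v = rearrangeFun u := by
  ext x
  refine congr_arg sSup (Set.ext fun t ↦ and_congr_right fun ht ↦ ?_)
  rw [h t ht]

lemma volume_lt_le_ballVol_mul (hrad : ∀ p q, ‖p‖ < ‖q‖ → v q ≤ v p) {t : ℝ}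
    {x : EuclideanSpace ℝ (Fin N)} (hx : v x ≤ t) :
    volume {y | t < v y} ≤ ballVol N * ENNReal.ofReal (‖x‖ ^ N) := by
  rw [← volume_closedBall_zero_eq_ballVol_mul (norm_nonneg x)]
  refine measure_mono fun y (hy : t < v y) ↦ mem_closedBall_zero_iff.2 ?_
  by_contra! hxy
  exact (hrad x y hxy).not_gt (hx.trans_lt hy)

variable [NeZero N]

lemma volume_ball_zero_eq_ballVol_mul {r : ℝ} (hr : 0 ≤ r) :
    volume (ball (0 : EuclideanSpace ℝ (Fin N)) r) = ballVol N * ENNReal.ofReal (r ^ N) := by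
  rw [Measure.addHaar_ball _ _ hr, finrank_euclideanSpace_fin, mul_comm, ballVol]

lemma ballVol_mul_strictMonoOn :
    StrictMonoOn (fun r : ℝ ↦ ballVol N * ENNReal.ofReal (r ^ N)) (Ici 0) :=
  fun a (ha : 0 ≤ a) _ _ hab ↦ ENNReal.mul_lt_mul_right (measure_ball_pos volume _ one_pos).ne'
    measure_ball_lt_top.ne ((ENNReal.ofReal_lt_ofReal_iff (pow_pos (ha.trans_lt hab) N)).2
      (pow_lt_pow_left₀ hab ha (NeZero.ne N)))

lemma ballVol_mul_lt_volume_lt (hv : Continuous v) (hrad : ∀ p q, ‖p‖ < ‖q‖ → v q ≤ v p) {t : ℝ}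
    {x : EuclideanSpace ℝ (Fin N)} (hx : t < v x) :
    ballVol N * ENNReal.ofReal (‖x‖ ^ N) < volume {y | t < v y} := by
  have hclosure : x ∈ closure (closedBall 0 ‖x‖)ᶜ := by
    simp [closure_compl, interior_closedBall']
  obtain ⟨y, hyt, hy⟩ := mem_closure_iff.1 hclosure _ (isOpen_lt continuous_const hv) hx
  rw [mem_compl_iff, mem_closedBall_zero_iff, not_le] at hy
  calc ballVol N * ENNReal.ofReal (‖x‖ ^ N)
      < ballVol N * ENNReal.ofReal (‖y‖ ^ N) :=
        ballVol_mul_strictMonoOn (norm_nonneg x) (norm_nonneg y) hy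
    _ = volume (ball 0 ‖y‖) := (volume_ball_zero_eq_ballVol_mul (norm_nonneg y)).symm
    _ ≤ volume {z | t < v z} :=
        measure_mono fun z hz ↦ hyt.trans_le (hrad z y (mem_ball_zero_iff.1 hz))

lemma rearrangeFun_eq_self (hv : Continuous v) (hv0 : ∀ x, 0 ≤ v x)
    (hrad : ∀ p q, ‖p‖ < ‖q‖ → v q ≤ v p) : rearrangeFun v = v := by
  ext x
  have hset : {t : ℝ | 0 < t ∧ ballVol N * ENNReal.ofReal (‖x‖ ^ N) < volume {y | t < v y}} =
      Ioo 0 (v x) := by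
    ext t
    refine and_congr_right fun _ ↦ ⟨fun h ↦ ?_, ballVol_mul_lt_volume_lt hv hrad⟩
    by_contra! hx
    exact h.not_ge (volume_lt_le_ballVol_mul hrad hx)
  rw [rearrangeFun, hset]
  rcases (hv0 x).eq_or_lt with h | h
  · rw [← h, Ioo_self, Real.sSup_empty]
  · exact csSup_Ioo h

lemma IsCompetitor.rearrangeFun (hk : Antitone k) (hJ : ConvexOn ℝ univ J) (hJ0 : ∀ a, 0 ≤ J a)
    (hu : IsCompetitor k J K M R u u) : IsCompetitor k J K M R u (rearrangeFun u) := by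
  obtain ⟨v, hv, hmin⟩ :=
    hu.exists_forall_firstMoment_le hk.measurable hJ.locallyLipschitz.continuous
  have hv_eq : _root_.rearrangeFun u = v :=
    (rearrangeFun_congr hv.volume_lt_eq).symm.trans <|
      rearrangeFun_eq_self hv.lipschitz.continuous (fun x ↦ (hv.mem_Icc x).1)
        fun _ _ ↦ hv.le_of_norm_lt hk hJ hJ0 hmin
  rwa [hv_eq]

lemma lipschitzWith_rearrangeFun (hu : LipschitzWith K u) (hsupp : HasCompactSupport u)
    (hu0 : ∀ x, 0 ≤ u x) : LipschitzWith K (rearrangeFun u) := by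
  obtain ⟨M, R, hc⟩ := exists_isCompetitor_self 0 0 hu hsupp hu0
  exact (hc.rearrangeFun antitone_const (convexOn_const 0 convex_univ) fun _ ↦ le_rfl).lipschitz

lemma kernelEnergy_rearrangeFun_le (hk : Antitone k) (hJ : ConvexOn ℝ univ J)
    (hJ0 : ∀ a, 0 ≤ J a) (hu : LipschitzWith K u) (hsupp : HasCompactSupport u)
    (hu0 : ∀ x, 0 ≤ u x) : kernelEnergy k J (rearrangeFun u) ≤ kernelEnergy k J u := by
  obtain ⟨M, R, hc⟩ := exists_isCompetitor_self k J hu hsupp hu0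
  exact (hc.rearrangeFun hk hJ hJ0).energy_le

end Rearrangement

section Young

variable {G g : ℝ → ℝ}

namespace IsYoungPair

lemma intervalIntegrable (hY : IsYoungPair G g) {a b : ℝ} (ha : 0 ≤ a) (hb : 0 ≤ b) :
    IntervalIntegrable g volume a b :=
  (hY.g_mono.mono fun _ hx ↦ (le_min ha hb).trans hx.1).intervalIntegrable

lemma g_nonneg (hY : IsYoungPair G g) {t : ℝ} (ht : 0 ≤ t) : 0 ≤ g t := by
  rw [← hY.g_zero]
  exact hY.g_mono self_mem_Ici ht ht

lemma sub_eq_integral (hY : IsYoungPair G g) {a b : ℝ} (ha : 0 ≤ a) (hb : 0 ≤ b) :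
    G b - G a = ∫ τ in a..b, g τ := by
  rw [hY.G_eq a ha, hY.G_eq b hb, intervalIntegral.integral_interval_sub_left]
  exacts [hY.intervalIntegrable le_rfl hb, hY.intervalIntegrable le_rfl ha]

lemma mul_le_sub (hY : IsYoungPair G g) {a b : ℝ} (ha : 0 ≤ a) (hab : a ≤ b) :
    (b - a) * g a ≤ G b - G a := by
  rw [hY.sub_eq_integral ha (ha.trans hab)]
  have := intervalIntegral.integral_mono_on hab (intervalIntegrable_const (c := g a))
    (hY.intervalIntegrable ha (ha.trans hab))
    fun x hx ↦ hY.g_mono ha (ha.trans hx.1) hx.1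
  simpa using this

lemma sub_le_mul (hY : IsYoungPair G g) {a b : ℝ} (ha : 0 ≤ a) (hab : a ≤ b) :
    G b - G a ≤ (b - a) * g b := by
  rw [hY.sub_eq_integral ha (ha.trans hab)]
  have := intervalIntegral.integral_mono_on hab (hY.intervalIntegrable ha (ha.trans hab))
    (intervalIntegrable_const (c := g b))
    fun x hx ↦ hY.g_mono (ha.trans hx.1) (ha.trans hab) hx.2
  simpa using this

lemma G_zero (hY : IsYoungPair G g) : G 0 = 0 := by
  rw [hY.G_eq 0 le_rfl, intervalIntegral.integral_same]

lemma monotoneOn (hY : IsYoungPair G g) : MonotoneOn G (Ici 0) := fun _ ha _ _ hab ↦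
  sub_nonneg.1 ((mul_nonneg (sub_nonneg.2 hab) (hY.g_nonneg ha)).trans (hY.mul_le_sub ha hab))

lemma G_nonneg (hY : IsYoungPair G g) {a : ℝ} (ha : 0 ≤ a) : 0 ≤ G a := by
  rw [← hY.G_zero]
  exact hY.monotoneOn self_mem_Ici ha ha

lemma nonneg_of_mul_le (hY : IsYoungPair G g) {p : ℝ} (hp : ∀ t > 0, t * g t ≤ p * G t) :
    0 ≤ p :=
  (pos_of_mul_pos_left ((mul_pos one_pos (hY.g_pos 1 one_pos)).trans_le (hp 1 one_pos))
    (hY.G_nonneg zero_le_one)).le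

lemma convexOn (hY : IsYoungPair G g) : ConvexOn ℝ (Ici 0) G := by
  refine convexOn_of_slope_mono_adjacent (convex_Ici 0) fun {x y z} (hx : 0 ≤ x) _ hxy hyz ↦ ?_
  calc (G y - G x) / (y - x) ≤ g y := by
        rw [div_le_iff₀' (sub_pos.2 hxy)]
        exact hY.sub_le_mul hx hxy.le
    _ ≤ (G z - G y) / (z - y) := by
        rw [le_div_iff₀' (sub_pos.2 hyz)]
        exact hY.mul_le_sub (hx.trans hxy.le) hyz.le

lemma convexOn_abs (hY : IsYoungPair G g) : ConvexOn ℝ univ fun a ↦ G |a| := by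
  have himage : (fun a : ℝ ↦ |a|) '' univ = Ici 0 := by
    ext b
    exact ⟨fun ⟨a, _, hab⟩ ↦ hab ▸ abs_nonneg a, fun hb ↦ ⟨b, trivial, abs_of_nonneg hb⟩⟩
  exact (himage ▸ hY.convexOn).comp (convexOn_norm convex_univ) (himage ▸ hY.monotoneOn)

lemma convexOn_abs_div (hY : IsYoungPair G g) (c : ℝ) : ConvexOn ℝ univ fun a ↦ G |a / c| :=
  hY.convexOn_abs.comp_linearMap (LinearMap.mulRight ℝ c⁻¹)

lemma continuous_abs (hY : IsYoungPair G g) : Continuous fun a ↦ G |a| :=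
  hY.convexOn_abs.locallyLipschitz.continuous

lemma hasDerivWithinAt (hY : IsYoungPair G g) {t : ℝ} (ht : 0 ≤ t) :
    HasDerivWithinAt G (g t) (Ici t) t := by
  have hmeas : StronglyMeasurableAtFilter g (𝓝[Ioi t] t) :=
    ⟨Ioi t, self_mem_nhdsWithin, (aemeasurable_restrict_of_monotoneOn measurableSet_Ioi
      (hY.g_mono.mono fun x hx ↦ ht.trans (le_of_lt hx))).aestronglyMeasurable⟩
  exact (intervalIntegral.integral_hasDerivWithinAt_right (hY.intervalIntegrable le_rfl ht) hmeas
    ((hY.g_rightCont t ht).mono Ioi_subset_Ici_self)).congr (fun x hx ↦ hY.G_eq x (ht.trans hx))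
      (hY.G_eq t ht)

lemma hasDerivWithinAt_mul_rpow (hY : IsYoungPair G g) (p : ℝ) {t : ℝ} (ht : 0 < t) :
    HasDerivWithinAt (fun t ↦ G t * t ^ (-p)) (t ^ (-p - 1) * (t * g t - p * G t)) (Ici t) t := by
  refine ((hY.hasDerivWithinAt ht.le).mul
    (Real.hasDerivAt_rpow_const (p := -p) (Or.inl ht.ne')).hasDerivWithinAt).congr_deriv ?_
  rw [Real.rpow_sub_one ht.ne']
  field_simp
  ring

lemma continuousOn_mul_rpow (hY : IsYoungPair G g) (p : ℝ) :
    ContinuousOn (fun t ↦ G t * t ^ (-p)) (Ioi 0) := by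
  refine ContinuousOn.mul ?_ (continuousOn_id.rpow_const fun x hx ↦ Or.inl (ne_of_gt hx))
  exact hY.continuous_abs.continuousOn.congr fun x hx ↦ by simp only [abs_of_pos hx.out]

lemma monotoneOn_mul_rpow (hY : IsYoungPair G g) {p : ℝ} (hp : ∀ t > 0, p * G t ≤ t * g t) :
    MonotoneOn (fun t ↦ G t * t ^ (-p)) (Ioi 0) := fun a (ha : 0 < a) _ _ hab ↦
  image_le_of_deriv_right_le_deriv_boundary (f := fun _ ↦ G a * a ^ (-p)) (f' := fun _ ↦ 0)
    (B := fun t ↦ G t * t ^ (-p))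
    continuousOn_const (fun _ _ ↦ hasDerivWithinAt_const _ _ _) le_rfl
    ((hY.continuousOn_mul_rpow p).mono fun _ hx ↦ ha.trans_le hx.1)
    (fun _ hx ↦ hY.hasDerivWithinAt_mul_rpow p (ha.trans_le hx.1))
    (fun _ hx ↦ mul_nonneg (Real.rpow_nonneg (ha.le.trans hx.1) _)
      (sub_nonneg.2 (hp _ (ha.trans_le hx.1)))) (right_mem_Icc.2 hab)

lemma antitoneOn_mul_rpow (hY : IsYoungPair G g) {p : ℝ} (hp : ∀ t > 0, t * g t ≤ p * G t) :
    AntitoneOn (fun t ↦ G t * t ^ (-p)) (Ioi 0) := fun a (ha : 0 < a) _ _ hab ↦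
  image_le_of_deriv_right_le_deriv_boundary (B := fun _ ↦ G a * a ^ (-p)) (B' := fun _ ↦ 0)
    ((hY.continuousOn_mul_rpow p).mono fun _ hx ↦ ha.trans_le hx.1)
    (fun _ hx ↦ hY.hasDerivWithinAt_mul_rpow p (ha.trans_le hx.1)) le_rfl
    continuousOn_const (fun _ _ ↦ hasDerivWithinAt_const _ _ _)
    (fun _ hx ↦ mul_nonpos_of_nonneg_of_nonpos (Real.rpow_nonneg (ha.le.trans hx.1) _)
      (sub_nonpos.2 (hp _ (ha.trans_le hx.1)))) (right_mem_Icc.2 hab)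

end IsYoungPair

lemma le_mul_rpow_of_mul_rpow_neg_le {s p a d r A B : ℝ} (ha : 0 < a) (hd : 0 < d) (hr : 0 < r)
    (h : A * (a / r ^ s) ^ (-p) ≤ B * (a / d ^ s) ^ (-p)) : A ≤ B * (d / r) ^ (s * p) := by
  have hdiv : (a / r ^ s) / (a / d ^ s) = (d / r) ^ s := by
    rw [Real.div_rpow hd.le hr.le]
    field_simp
  have hpos : 0 < (a / r ^ s) ^ p := by positivity
  rw [Real.rpow_neg (by positivity), Real.rpow_neg (by positivity), ← div_eq_mul_inv,
    div_le_iff₀ hpos] at h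
  rw [Real.rpow_mul (by positivity), ← hdiv, Real.div_rpow (by positivity) (by positivity)]
  exact h.trans_eq (by ring)

namespace IsYoungPair

variable {s p : ℝ}

lemma div_rpow_le_of_le (hY : IsYoungPair G g) (hp : ∀ t > 0, p * G t ≤ t * g t) (hs : 0 ≤ s)
    {a d r : ℝ} (ha : 0 ≤ a) (hd : 0 < d) (hdr : d ≤ r) :
    G (a / r ^ s) ≤ G (a / d ^ s) * (d / r) ^ (s * p) := by
  have hr := hd.trans_le hdr
  rcases ha.eq_or_lt with rfl | ha
  · simp [hY.G_zero]
  · exact le_mul_rpow_of_mul_rpow_neg_le ha hd hr <| hY.monotoneOn_mul_rpow hp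
      (mem_Ioi.2 (by positivity)) (mem_Ioi.2 (by positivity)) (by gcongr)

lemma div_rpow_le_of_ge (hY : IsYoungPair G g) (hp : ∀ t > 0, t * g t ≤ p * G t) (hs : 0 ≤ s)
    {a d r : ℝ} (ha : 0 ≤ a) (hr : 0 < r) (hrd : r ≤ d) :
    G (a / r ^ s) ≤ G (a / d ^ s) * (d / r) ^ (s * p) := by
  have hd := hr.trans_le hrd
  rcases ha.eq_or_lt with rfl | ha
  · simp [hY.G_zero]
  · exact le_mul_rpow_of_mul_rpow_neg_le ha hd hr <| hY.antitoneOn_mul_rpow hp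
      (mem_Ioi.2 (by positivity)) (mem_Ioi.2 (by positivity)) (by gcongr)

end IsYoungPair

end Young

section Layers

variable {G g : ℝ → ℝ} {s ν p : ℝ}

lemma setLIntegral_Ioi_ofReal_mul_rpow (hν : 0 < ν) {c r : ℝ} (hc : 0 ≤ c) (hr : 0 < r) :
    ∫⁻ ρ in Ioi r, ENNReal.ofReal (c * ρ ^ (-(ν + 1))) = ENNReal.ofReal (c * r ^ (-ν) / ν) := by
  have hlt : -(ν + 1) < -1 := by linarith
  rw [← ofReal_integral_eq_lintegral_ofReal ((integrableOn_Ioi_rpow_of_lt hlt hr).const_mul c),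
    integral_const_mul, integral_Ioi_rpow_of_lt hlt hr]
  · rw [show -(ν + 1) + 1 = -ν by ring, neg_div_neg_eq, mul_div_assoc]
  · filter_upwards [ae_restrict_mem measurableSet_Ioi] with ρ hρ
    exact mul_nonneg hc (Real.rpow_nonneg (hr.le.trans (le_of_lt hρ)) _)

/-- The superposition over the scales `ρ > r` of `G |a / ρ ^ s|`, with weight `ρ ^ (-(ν + 1))`.
For `r = |x - y|` and `ν = N` it is comparable to the integrand of `fracSeminorm`. -/
noncomputable def scaleIntegral (s ν : ℝ) (G : ℝ → ℝ) (a r : ℝ) : ℝ≥0∞ :=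
  ∫⁻ ρ in Ioi r, ENNReal.ofReal (G |a / ρ ^ s| * ρ ^ (-(ν + 1)))

lemma IsYoungPair.scaleIntegral_le (hY : IsYoungPair G g) (hs : 0 ≤ s) (hν : 0 < ν) (a : ℝ) {r : ℝ}
    (hr : 0 < r) :
    scaleIntegral s ν G a r ≤ ENNReal.ofReal (G (|a| / r ^ s) * r ^ (-ν) / ν) := by
  rw [← setLIntegral_Ioi_ofReal_mul_rpow hν (hY.G_nonneg (by positivity)) hr]
  refine setLIntegral_mono' measurableSet_Ioi fun ρ (hρ : r < ρ) ↦ ENNReal.ofReal_le_ofReal ?_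
  have hρ0 : 0 < ρ := hr.trans hρ
  rw [abs_div, abs_of_pos (Real.rpow_pos_of_pos hρ0 s)]
  refine mul_le_mul_of_nonneg_right (hY.monotoneOn ?_ ?_ ?_) (by positivity)
  · exact mem_Ici.2 (by positivity)
  · exact mem_Ici.2 (by positivity)
  · gcongr

lemma IsYoungPair.le_scaleIntegral (hY : IsYoungPair G g) (hp : ∀ t > 0, t * g t ≤ p * G t)
    (hs : 0 ≤ s) (hν : 0 < ν + s * p) (a : ℝ) {r : ℝ} (hr : 0 < r) :
    ENNReal.ofReal (G (|a| / r ^ s) * r ^ (-ν)) ≤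
      ENNReal.ofReal (ν + s * p) * scaleIntegral s ν G a r := by
  have hG : 0 ≤ G (|a| / r ^ s) := hY.G_nonneg (by positivity)
  have hbase : ENNReal.ofReal (G (|a| / r ^ s) * r ^ (-ν) / (ν + s * p)) ≤
      scaleIntegral s ν G a r := by
    have hr' : G (|a| / r ^ s) * r ^ (-ν) =
        G (|a| / r ^ s) * r ^ (s * p) * r ^ (-(ν + s * p)) := by
      rw [mul_assoc, ← Real.rpow_add hr]
      ring_nf
    rw [hr', ← setLIntegral_Ioi_ofReal_mul_rpow hν (by positivity) hr]
    refine setLIntegral_mono' measurableSet_Ioi fun ρ (hρ : r < ρ) ↦ ENNReal.ofReal_le_ofReal ?_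
    have hρ0 : 0 < ρ := hr.trans hρ
    calc G (|a| / r ^ s) * r ^ (s * p) * ρ ^ (-(ν + s * p + 1))
        ≤ G (|a| / ρ ^ s) * (ρ / r) ^ (s * p) * r ^ (s * p) * ρ ^ (-(ν + s * p + 1)) := by
          gcongr
          exact hY.div_rpow_le_of_ge hp hs (abs_nonneg a) hr hρ.le
      _ = G (|a| / ρ ^ s) * (ρ ^ (s * p) * ρ ^ (-(ν + s * p + 1))) := by
          rw [Real.div_rpow hρ0.le hr.le]
          field_simp
      _ = G |a / ρ ^ s| * ρ ^ (-(ν + 1)) := by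
          rw [← Real.rpow_add hρ0, abs_div, abs_of_pos (Real.rpow_pos_of_pos hρ0 s)]
          ring_nf
  calc ENNReal.ofReal (G (|a| / r ^ s) * r ^ (-ν))
      = ENNReal.ofReal (ν + s * p) *
          ENNReal.ofReal (G (|a| / r ^ s) * r ^ (-ν) / (ν + s * p)) := by
        rw [← ENNReal.ofReal_mul hν.le, mul_div_cancel₀ _ hν.ne']
    _ ≤ ENNReal.ofReal (ν + s * p) * scaleIntegral s ν G a r := by gcongr

section

variable {X : Type*} [PseudoMetricSpace X] {u : X → ℝ}

lemma scaleIntegral_eq_lintegral_interaction (hY : IsYoungPair G g) (u : X → ℝ) (x y : X) :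
    scaleIntegral s ν G (u x - u y) (dist x y) = ∫⁻ ρ in Ioi 0, ENNReal.ofReal (ρ ^ (-(ν + 1))) *
      interaction ((Iio ρ).indicator 1) (fun a ↦ G |a / ρ ^ s|) u x y := by
  have hinter : Ioi (dist x y) ∩ Ioi 0 = Ioi (dist x y) :=
    inter_eq_left.2 (Ioi_subset_Ioi dist_nonneg)
  rw [scaleIntegral, ← hinter, ← setLIntegral_indicator measurableSet_Ioi]
  refine lintegral_congr fun ρ ↦ ?_
  by_cases h : dist x y < ρ
  · simp [interaction, h, mul_comm, ENNReal.ofReal_mul (hY.G_nonneg (abs_nonneg _))]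
  · simp [interaction, h]

lemma lintegral_scaleIntegral [SecondCountableTopology X] [MeasureSpace X] [OpensMeasurableSpace X]
    [SFinite (volume : Measure X)] (hY : IsYoungPair G g) (hu : Measurable u) :
    ∫⁻ x, ∫⁻ y, scaleIntegral s ν G (u x - u y) (dist x y) =
      ∫⁻ ρ in Ioi 0, ENNReal.ofReal (ρ ^ (-(ν + 1))) *
        kernelEnergy ((Iio ρ).indicator 1) (fun a ↦ G |a / ρ ^ s|) u := by
  have hm : Measurable fun w : (X × X) × ℝ ↦ ENNReal.ofReal (w.2 ^ (-(ν + 1))) *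
      interaction ((Iio w.2).indicator 1) (fun a ↦ G |a / w.2 ^ s|) u w.1.1 w.1.2 := by
    have hG := hY.continuous_abs.measurable
    unfold interaction
    simp only [indicator_apply, mem_Iio]
    refine Measurable.mul (by fun_prop) (Measurable.mul ?_ ?_)
    · exact Measurable.ite (measurableSet_lt (by fun_prop) (by fun_prop)) measurable_const
        measurable_const
    · exact (hG.comp (by fun_prop)).ennreal_ofReal
  simp_rw [scaleIntegral_eq_lintegral_interaction hY]
  rw [lintegral_lintegral hm.lintegral_prod_right'.aemeasurable,
    lintegral_lintegral_swap hm.aemeasurable]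
  refine lintegral_congr fun ρ ↦ ?_
  rw [lintegral_const_mul' _ _ ENNReal.ofReal_ne_top, kernelEnergy, lintegral_lintegral]
  exact (measurable_interaction (measurable_one.indicator measurableSet_Iio)
    (hY.convexOn_abs_div _).locallyLipschitz.continuous.measurable hu).aemeasurable

end

variable {N : ℕ} {u : EuclideanSpace ℝ (Fin N) → ℝ}

lemma lintegral_scaleIntegral_rearrangeFun_le [NeZero N] (hY : IsYoungPair G g) {K : NNReal}
    (hu : LipschitzWith K u) (hsupp : HasCompactSupport u) (hu0 : ∀ x, 0 ≤ u x) :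
    ∫⁻ x, ∫⁻ y, scaleIntegral s ν G (rearrangeFun u x - rearrangeFun u y) (dist x y) ≤
      ∫⁻ x, ∫⁻ y, scaleIntegral s ν G (u x - u y) (dist x y) := by
  have hk : ∀ ρ : ℝ, Antitone ((Iio ρ).indicator (1 : ℝ → ℝ≥0∞)) := by
    intro ρ a b hab
    by_cases h : b < ρ
    · simp [h, hab.trans_lt h]
    · simp [h]
  rw [lintegral_scaleIntegral hY (lipschitzWith_rearrangeFun hu hsupp hu0).continuous.measurable,
    lintegral_scaleIntegral hY hu.continuous.measurable]
  gcongr with ρ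
  exact kernelEnergy_rearrangeFun_le (hk ρ) (hY.convexOn_abs_div (ρ ^ s))
    (fun a ↦ hY.G_nonneg (abs_nonneg _)) hu hsupp hu0

lemma fracSeminorm_univ_le_lintegral_scaleIntegral (hY : IsYoungPair G g)
    (hp : ∀ t > 0, t * g t ≤ p * G t) (hs : 0 ≤ s) (hN : 0 < N + s * p) :
    fracSeminorm s G u univ univ ≤ ENNReal.ofReal (N + s * p) *
      ∫⁻ x, ∫⁻ y, scaleIntegral s N G (u x - u y) (dist x y) := by
  simp_rw [fracSeminorm, Measure.restrict_univ,
    ← lintegral_const_mul' _ _ (ENNReal.ofReal_ne_top (r := N + s * p))]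
  refine lintegral_mono fun x ↦ lintegral_mono fun y ↦ ?_
  rcases eq_or_ne x y with rfl | hxy
  · simp [hY.G_zero]
  · rw [div_eq_mul_inv, ← Real.rpow_neg dist_nonneg]
    exact hY.le_scaleIntegral hp hs hN _ (dist_pos.2 hxy)

lemma lintegral_scaleIntegral_le_fracSeminorm_univ [NeZero N] (hY : IsYoungPair G g)
    (hs : 0 ≤ s) :
    ∫⁻ x, ∫⁻ y, scaleIntegral s N G (u x - u y) (dist x y) ≤
      ENNReal.ofReal (N : ℝ)⁻¹ * fracSeminorm s G u univ univ := by
  have hN : 0 < (N : ℝ) := Nat.cast_pos.2 (NeZero.pos N)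
  simp_rw [fracSeminorm, Measure.restrict_univ,
    ← lintegral_const_mul' _ _ (ENNReal.ofReal_ne_top (r := (N : ℝ)⁻¹))]
  refine lintegral_mono fun x ↦ lintegral_mono fun y ↦ ?_
  rcases eq_or_ne x y with rfl | hxy
  · simp [scaleIntegral, hY.G_zero]
  · refine (hY.scaleIntegral_le hs hN _ (dist_pos.2 hxy)).trans_eq ?_
    rw [← ENNReal.ofReal_mul (by positivity), Real.rpow_neg dist_nonneg]
    ring_nf

lemma fracSeminorm_rearrangeFun_le [NeZero N] (hY : IsYoungPair G g)
    (hp : ∀ t > 0, t * g t ≤ p * G t) (hs : 0 ≤ s) {K : NNReal} (hu : LipschitzWith K u)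
    (hsupp : HasCompactSupport u) (hu0 : ∀ x, 0 ≤ u x) :
    fracSeminorm s G (rearrangeFun u) univ univ ≤
      ENNReal.ofReal (1 + s * p / N) * fracSeminorm s G u univ univ := by
  have hN : 0 < (N : ℝ) := Nat.cast_pos.2 (NeZero.pos N)
  have hNp : 0 < N + s * p := by have := hY.nonneg_of_mul_le hp; positivity
  calc fracSeminorm s G (rearrangeFun u) univ univ
      ≤ ENNReal.ofReal (N + s * p) * ∫⁻ x, ∫⁻ y,
          scaleIntegral s N G (rearrangeFun u x - rearrangeFun u y) (dist x y) :=
        fracSeminorm_univ_le_lintegral_scaleIntegral hY hp hs hNp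
    _ ≤ ENNReal.ofReal (N + s * p) *
          ∫⁻ x, ∫⁻ y, scaleIntegral s N G (u x - u y) (dist x y) :=
        mul_le_mul_right (lintegral_scaleIntegral_rearrangeFun_le hY hu hsupp hu0) _
    _ ≤ ENNReal.ofReal (N + s * p) *
          (ENNReal.ofReal (N : ℝ)⁻¹ * fracSeminorm s G u univ univ) := by
        gcongr
        exact lintegral_scaleIntegral_le_fracSeminorm_univ hY hs
    _ = ENNReal.ofReal (1 + s * p / N) * fracSeminorm s G u univ univ := by
        rw [← mul_assoc, ← ENNReal.ofReal_mul hNp.le]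
        congr 2
        field_simp

end Layers

section Domain

section

variable {E : Type*} [NormedAddCommGroup E] [NormedSpace ℝ E] {Ω : Set E} {x y : E}

lemma infDist_frontier_le_dist (hΩ : IsOpen Ω) (hx : x ∈ Ω) (hy : y ∉ Ω) :
    infDist x (frontier Ω) ≤ dist x y := by
  obtain ⟨z, hz, hzΩ⟩ : ∃ z ∈ closure Ω ∩ segment ℝ x y, z ∉ Ω := by
    by_contra! h
    exact hy ((convex_segment x y).isPreconnected.subset_of_closure_inter_subset hΩ
      ⟨x, left_mem_segment ℝ x y, hx⟩ h (right_mem_segment ℝ x y))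
  have hzf : z ∈ frontier Ω := hΩ.frontier_eq ▸ ⟨hz.1, hzΩ⟩
  calc infDist x (frontier Ω) ≤ dist x z := infDist_le_dist_of_mem hzf
    _ ≤ dist x z + dist z y := le_add_of_nonneg_right dist_nonneg
    _ = dist x y := dist_add_dist_of_mem_segment hz.2

lemma infDist_frontier_pos (hΩ : IsOpen Ω) (hx : x ∈ Ω) (hy : y ∉ Ω) :
    0 < infDist x (frontier Ω) := by
  refine (isClosed_frontier.notMem_iff_infDist_pos
    (nonempty_frontier_iff.2 ⟨⟨x, hx⟩, fun h ↦ hy (h ▸ mem_univ y)⟩)).1 ?_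
  rw [hΩ.frontier_eq]
  exact fun h ↦ h.2 hx

end

lemma lintegral_lintegral_eq_add_two_mul {X : Type*} [MeasurableSpace X] {μ : Measure X}
    [SFinite μ] {F : X → X → ℝ≥0∞} (hF : Measurable (Function.uncurry F))
    (hsymm : ∀ x y, F x y = F y x) {s : Set X} (hs : MeasurableSet s)
    (hzero : ∀ x ∉ s, ∀ y ∉ s, F x y = 0) :
    ∫⁻ x, ∫⁻ y, F x y ∂μ ∂μ =
      ∫⁻ x in s, ∫⁻ y in s, F x y ∂μ ∂μ + 2 * ∫⁻ x in s, ∫⁻ y in sᶜ, F x y ∂μ ∂μ := by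
  have hm : Measurable fun x ↦ ∫⁻ y in s, F x y ∂μ := hF.lintegral_prod_right'
  have hswap : ∫⁻ x in sᶜ, ∫⁻ y in s, F x y ∂μ ∂μ = ∫⁻ x in s, ∫⁻ y in sᶜ, F x y ∂μ ∂μ := by
    rw [lintegral_lintegral_swap hF.aemeasurable]
    simp_rw [hsymm]
  have hcompl : ∫⁻ x in sᶜ, ∫⁻ y in sᶜ, F x y ∂μ ∂μ = 0 :=
    setLIntegral_eq_zero hs.compl fun x hx ↦
      setLIntegral_eq_zero hs.compl fun y hy ↦ hzero x hx y hy
  rw [← lintegral_add_compl (fun x ↦ ∫⁻ y, F x y ∂μ) hs]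
  simp_rw [fun x ↦ (lintegral_add_compl (F x) (μ := μ) hs).symm]
  rw [lintegral_add_left hm, lintegral_add_left hm, hswap, hcompl, add_zero, two_mul, add_assoc]

variable {G g : ℝ → ℝ} {N : ℕ} {s p : ℝ} {Ω : Set (EuclideanSpace ℝ (Fin N))}
  {u : EuclideanSpace ℝ (Fin N) → ℝ}

lemma IsYoungPair.measurable_integrand_fracSeminorm (hY : IsYoungPair G g) (hu : Measurable u) :
    Measurable (Function.uncurry fun x y ↦
      ENNReal.ofReal (G (|u x - u y| / dist x y ^ s) / dist x y ^ (N : ℝ))) := by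
  have hG : Measurable fun a ↦ G |a| := hY.continuous_abs.measurable
  have habs : ∀ x y, |u x - u y| / dist x y ^ s = |(u x - u y) / dist x y ^ s| := fun x y ↦ by
    rw [abs_div, abs_of_nonneg (Real.rpow_nonneg dist_nonneg s)]
  simp_rw [habs]
  exact ((hG.comp (by fun_prop)).div (by fun_prop)).ennreal_ofReal

lemma fracSeminorm_univ_eq (hY : IsYoungPair G g) (hΩ : MeasurableSet Ω) (hu : Measurable u)
    (huΩ : ∀ y ∉ Ω, u y = 0) :
    fracSeminorm s G u univ univ = fracSeminorm s G u Ω Ω + 2 * fracSeminorm s G u Ω Ωᶜ := by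
  rw [fracSeminorm, Measure.restrict_univ]
  refine lintegral_lintegral_eq_add_two_mul (hY.measurable_integrand_fracSeminorm hu)
    (fun x y ↦ ?_) hΩ fun x hx y hy ↦ ?_
  · rw [abs_sub_comm, dist_comm]
  · simp [huΩ x hx, huΩ y hy, hY.G_zero]

lemma setLIntegral_compl_le (hY : IsYoungPair G g) (hp : ∀ t > 0, p * G t ≤ t * g t) (hs : 0 ≤ s)
    (hΩ : IsOpen Ω) {c : ℝ} (hc : 0 ≤ c) {x : EuclideanSpace ℝ (Fin N)} (hx : x ∈ Ω)
    (hi : ∫⁻ y in Ωᶜ, ENNReal.ofReal (dist x y ^ (-((N : ℝ) + s * p))) ≤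
      ENNReal.ofReal (c * infDist x (frontier Ω) ^ (-(s * p)))) {a : ℝ} (ha : 0 ≤ a) :
    ∫⁻ y in Ωᶜ, ENNReal.ofReal (G (a / dist x y ^ s) / dist x y ^ (N : ℝ)) ≤
      ENNReal.ofReal c * ENNReal.ofReal (G (a / infDist x (frontier Ω) ^ s)) := by
  rcases Ωᶜ.eq_empty_or_nonempty with he | ⟨z, hz⟩
  · simp [he]
  set d := infDist x (frontier Ω)
  have hd0 : 0 < d := infDist_frontier_pos hΩ hx hz
  have hG0 : 0 ≤ G (a / d ^ s) := hY.G_nonneg (by positivity)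
  calc ∫⁻ y in Ωᶜ, ENNReal.ofReal (G (a / dist x y ^ s) / dist x y ^ (N : ℝ))
      ≤ ∫⁻ y in Ωᶜ, ENNReal.ofReal (G (a / d ^ s) * d ^ (s * p)) *
          ENNReal.ofReal (dist x y ^ (-((N : ℝ) + s * p))) := by
        refine setLIntegral_mono' hΩ.measurableSet.compl fun y hy ↦ ?_
        have hdr : d ≤ dist x y := infDist_frontier_le_dist hΩ hx hy
        have hr : 0 < dist x y := hd0.trans_le hdr
        rw [← ENNReal.ofReal_mul (by positivity)]
        refine ENNReal.ofReal_le_ofReal ((div_le_iff₀ (by positivity)).2 ?_)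
        refine (hY.div_rpow_le_of_le hp hs ha hd0 hdr).trans_eq ?_
        rw [Real.div_rpow hd0.le hr.le, Real.rpow_neg hr.le, Real.rpow_add hr]
        field_simp
    _ ≤ ENNReal.ofReal (G (a / d ^ s) * d ^ (s * p)) * ENNReal.ofReal (c * d ^ (-(s * p))) := by
        rw [lintegral_const_mul' _ _ ENNReal.ofReal_ne_top]
        gcongr
    _ = ENNReal.ofReal c * ENNReal.ofReal (G (a / d ^ s)) := by
        rw [← ENNReal.ofReal_mul (by positivity), ← ENNReal.ofReal_mul hc, Real.rpow_neg hd0.le]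
        congr 1
        field_simp

lemma fracSeminorm_compl_le (hY : IsYoungPair G g) (hp : ∀ t > 0, p * G t ≤ t * g t) (hs : 0 ≤ s)
    (hΩ : IsOpen Ω) {c : ℝ} (hc : 0 ≤ c)
    (hi : ∀ x ∈ Ω, ∫⁻ y in Ωᶜ, ENNReal.ofReal (dist x y ^ (-((N : ℝ) + s * p))) ≤
      ENNReal.ofReal (c * infDist x (frontier Ω) ^ (-(s * p))))
    (hu0 : ∀ x, 0 ≤ u x) (huΩ : ∀ y ∉ Ω, u y = 0) :
    fracSeminorm s G u Ω Ωᶜ ≤ ENNReal.ofReal c *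
      ∫⁻ x in Ω, ENNReal.ofReal (G (u x / infDist x (frontier Ω) ^ s)) := by
  rw [fracSeminorm, ← lintegral_const_mul' _ _ ENNReal.ofReal_ne_top]
  refine setLIntegral_mono' hΩ.measurableSet fun x hx ↦ ?_
  refine le_trans (setLIntegral_mono' hΩ.measurableSet.compl fun y hy ↦ ?_)
    (setLIntegral_compl_le hY hp hs hΩ hc hx (hi x hx) (hu0 x))
  rw [huΩ y hy, sub_zero, abs_of_nonneg (hu0 x)]

lemma fracSeminorm_univ_le (hY : IsYoungPair G g) (hp : ∀ t > 0, p * G t ≤ t * g t) (hs : 0 ≤ s)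
    (hΩ : IsOpen Ω) {c₁ : ℝ} (hc₁ : 0 ≤ c₁)
    (hi : ∀ x ∈ Ω, ∫⁻ y in Ωᶜ, ENNReal.ofReal (dist x y ^ (-((N : ℝ) + s * p))) ≤
      ENNReal.ofReal (c₁ * infDist x (frontier Ω) ^ (-(s * p))))
    {c₂ : ℝ} (hc₂ : 0 ≤ c₂) (hu : Measurable u) (hu0 : ∀ x, 0 ≤ u x) (huΩ : ∀ y ∉ Ω, u y = 0)
    (hii : ∫⁻ x in Ω, ENNReal.ofReal (G (u x / infDist x (frontier Ω) ^ s)) ≤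
      ENNReal.ofReal c₂ * fracSeminorm s G u Ω Ω) :
    fracSeminorm s G u univ univ ≤
      ENNReal.ofReal (1 + 2 * (c₁ * c₂)) * fracSeminorm s G u Ω Ω := by
  calc fracSeminorm s G u univ univ
      = fracSeminorm s G u Ω Ω + 2 * fracSeminorm s G u Ω Ωᶜ :=
        fracSeminorm_univ_eq hY hΩ.measurableSet hu huΩ
    _ ≤ fracSeminorm s G u Ω Ω +
          2 * (ENNReal.ofReal c₁ * (ENNReal.ofReal c₂ * fracSeminorm s G u Ω Ω)) := by
        gcongr
        exact (fracSeminorm_compl_le hY hp hs hΩ hc₁ hi hu0 huΩ).trans (by gcongr)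
    _ = ENNReal.ofReal (1 + 2 * (c₁ * c₂)) * fracSeminorm s G u Ω Ω := by
        rw [ENNReal.ofReal_add one_pos.le (by positivity), ENNReal.ofReal_one,
          ENNReal.ofReal_mul two_pos.le, ENNReal.ofReal_mul hc₁, ENNReal.ofReal_ofNat]
        ring

end Domain

section Main

variable {N : ℕ} {Ω : Set (EuclideanSpace ℝ (Fin N))} {u : EuclideanSpace ℝ (Fin N) → ℝ}

lemma IsTestFun.exists_lipschitzWith (hu : IsTestFun Ω u) : ∃ K, LipschitzWith K u :=
  hu.1.lipschitzWith_of_hasCompactSupport hu.2.1 (by simp)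

lemma IsTestFun.eq_zero (hu : IsTestFun Ω u) : ∀ x ∉ Ω, u x = 0 := fun _ hx ↦
  image_eq_zero_of_notMem_tsupport fun h ↦ hx (hu.2.2 h)

theorem rearrangement_bound_of_hardy_general (hN : 1 ≤ N) {s : ℝ} (hs : 0 ≤ s) {G g : ℝ → ℝ}
    (hY : IsYoungPair G g) {pm pp : ℝ} (hG : ∀ t > 0, pm * G t ≤ t * g t ∧ t * g t ≤ pp * G t)
    (hΩ : IsOpen Ω) {c₁ : ℝ} (hc₁ : 0 ≤ c₁)
    (hi : ∀ x ∈ Ω, ∫⁻ y in Ωᶜ, ENNReal.ofReal (dist x y ^ (-((N : ℝ) + s * pm))) ≤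
      ENNReal.ofReal (c₁ * infDist x (frontier Ω) ^ (-(s * pm)))) {c₂ : ℝ} (hc₂ : 0 ≤ c₂) :
    ∃ C > (0 : ℝ), ∀ u : EuclideanSpace ℝ (Fin N) → ℝ, (∃ K, LipschitzWith K u) →
      HasCompactSupport u → (∀ x ∉ Ω, u x = 0) → (∀ x, 0 ≤ u x) →
      ∫⁻ x in Ω, ENNReal.ofReal (G (u x / infDist x (frontier Ω) ^ s)) ≤
        ENNReal.ofReal c₂ * fracSeminorm s G u Ω Ω →
      fracSeminorm s G (rearrangeFun u) univ univ ≤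
        ENNReal.ofReal C * fracSeminorm s G u Ω Ω := by
  have : NeZero N := ⟨by lia⟩
  have hpm := fun t ht ↦ (hG t ht).1
  have hpp := fun t ht ↦ (hG t ht).2
  have hpp0 := hY.nonneg_of_mul_le hpp
  refine ⟨(1 + s * pp / N) * (1 + 2 * (c₁ * c₂)), by positivity, ?_⟩
  rintro u ⟨K, hK⟩ hsupp huΩ hu0 hii
  calc fracSeminorm s G (rearrangeFun u) univ univ
      ≤ ENNReal.ofReal (1 + s * pp / N) * fracSeminorm s G u univ univ :=
        fracSeminorm_rearrangeFun_le hY hpp hs hK hsupp hu0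
    _ ≤ ENNReal.ofReal (1 + s * pp / N) *
          (ENNReal.ofReal (1 + 2 * (c₁ * c₂)) * fracSeminorm s G u Ω Ω) := by
        gcongr
        exact fracSeminorm_univ_le hY hpm hs hΩ hc₁ hi hc₂ hK.continuous.measurable hu0 huΩ hii
    _ = ENNReal.ofReal ((1 + s * pp / N) * (1 + 2 * (c₁ * c₂))) * fracSeminorm s G u Ω Ω := by
        rw [ENNReal.ofReal_mul (by positivity), mul_assoc]

end Main

/-- rearrangement bound assuming the integral estimate for the complement
kernel and the fractional Orlicz–Hardy inequality on `Ω`. -/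
theorem rearrangement_bound_of_hardy
    {N : ℕ} (hN : 1 ≤ N) {s : ℝ} (hs : s ∈ Set.Ioo (0 : ℝ) 1)
    {G g : ℝ → ℝ} (hY : IsYoungPair G g) {pm pp : ℝ} (hG : GrowthCond G g pm pp)
    {Ω : Set (EuclideanSpace ℝ (Fin N))} (hΩopen : IsOpen Ω) (hΩne : Ω.Nonempty)
    {c₁ : ℝ} (hc₁ : 0 < c₁)
    (hi : ∀ x ∈ Ω,
      (∫⁻ y in Ωᶜ, ENNReal.ofReal (dist x y ^ (-((N : ℝ) + s * pm)))) ≤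
        ENNReal.ofReal (c₁ * infDist x (frontier Ω) ^ (-(s * pm))))
    {c₂ : ℝ} (hc₂ : 0 < c₂)
    (hii : ∀ u : EuclideanSpace ℝ (Fin N) → ℝ, IsTestFun Ω u → (∀ x, 0 ≤ u x) →
      (∫⁻ x in Ω, ENNReal.ofReal (G (u x / infDist x (frontier Ω) ^ s))) ≤
        ENNReal.ofReal c₂ * fracSeminorm s G u Ω Ω) :
    ∃ C > (0 : ℝ), ∀ u : EuclideanSpace ℝ (Fin N) → ℝ, IsTestFun Ω u → (∀ x, 0 ≤ u x) →
      fracSeminorm s G (rearrangeFun u) Set.univ Set.univ ≤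
        ENNReal.ofReal C * fracSeminorm s G u Ω Ω := by
  obtain ⟨C, hC, h⟩ := rearrangement_bound_of_hardy_general hN hs.1.le hY hG.2.2 hΩopen hc₁.le hi
    hc₂.le
  exact ⟨C, hC, fun u hu hu0 ↦ h u hu.exists_lipschitzWith hu.2.1 hu.eq_zero hu0 (hii u hu hu0)⟩
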